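/- arXiv:2410.09969 — 6 statements merged into one kernel-verified Lean document; each statement's English description precedes it below -/
import Mathlib

section
/- Let p be a prime, k a perfect field of characteristic p, W = W(k) its ring of p-typical Witt vectors with Frobenius σ, and let M be a W-module on which multiplication by p is injective, equipped with an additive σ-semilinear map F : M → M. Let B' ⊆ M be a W-submodule with F(B') ⊆ B'. Suppose x ∈ M and k₀ ∈ ℕ are such that p^{k₀}·x ∈ B', F(x) − x ∈ B', and for every m ∈ ℕ there exists y ∈ B' with F^m(p^{k₀}·x) = p^m·y. Then x ∈ B'. (This is the core step in the paper's proof that for a smooth proper variety with torsion-free H³_cris, the group cœur(H²(X,WΩ¹))^{F=1} is a free ℤ_p-module.) -/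
/-!
Since `p` is fixed by the Frobenius, `F^[m]` commutes with multiplication by `p ^ k₀`. For
`m = k₀`, cancelling `p ^ k₀` in `F^[k₀] (p ^ k₀ • x) = p ^ k₀ • y` gives `F^[k₀] x = y ∈ B'`.
As `F` acts trivially on the class of `x` modulo `B'`, also `x ∈ B'`.
-/

theorem iterate_sub_self_mem {G E S : Type*} [AddGroup G] [FunLike E G G]
    [AddMonoidHomClass E G G] [SetLike S G] [AddSubgroupClass S G] (F : E) {B : S}
    (hB : ∀ b ∈ B, F b ∈ B) {x : G} (hx : F x - x ∈ B) (m : ℕ) : F^[m] x - x ∈ B := by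
  induction m with
  | zero => simp
  | succ m ih =>
    have telescope : F^[m + 1] x - x = F (F^[m] x - x) + (F x - x) := by
      rw [Function.iterate_succ_apply', map_sub, sub_add_sub_cancel]
    rw [telescope]
    exact add_mem (hB _ ih) hx

theorem iterate_map_smul_of_map_eq_self {R M : Type*} [Semiring R] [AddCommMonoid M]
    [Module R M] {σ : R →+* R} (F : M →ₛₗ[σ] M) {c : R} (hc : σ c = c) (m : ℕ) (x : M) :
    F^[m] (c • x) = c • F^[m] x := by
  have commute_smul : Function.Commute F (c • ·) := fun z ↦ by
    rw [map_smulₛₗ, hc]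
  exact (commute_smul.iterate_left m).eq x

theorem stmt0_general {R M : Type*} [Ring R] [AddCommGroup M] [Module R M]
    {σ : R →+* R} (F : M →ₛₗ[σ] M) {B : Submodule R M} (hB : ∀ b ∈ B, F b ∈ B)
    {c : R} (hσc : σ c = c) (hc : IsSMulRegular M c)
    {x y : M} (hx : F x - x ∈ B) (hy : y ∈ B) {m : ℕ} (hxy : F^[m] (c • x) = c • y) : x ∈ B := by
  have iterate_eq : F^[m] x = y :=
    hc ((iterate_map_smul_of_map_eq_self F hσc m x).symm.trans hxy)
  have y_sub_x_mem : y - x ∈ B := iterate_eq ▸ iterate_sub_self_mem F hB hx m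
  exact (B.sub_mem_iff_right hy).mp y_sub_x_mem

/-- Let `p` be a prime, `k` a perfect field of characteristic `p`,
`W = W(k)` its ring of `p`-typical Witt vectors with Frobenius `σ`, and `M` a `W`-module
on which multiplication by `p` is injective, equipped with an additive `σ`-semilinear map
`F : M → M`.  Let `B' ⊆ M` be a `W`-submodule stable under `F`.  Suppose `x ∈ M` and
`k₀ ∈ ℕ` satisfy `p^k₀ • x ∈ B'`, `F x − x ∈ B'`, and for every `m` there is `y ∈ B'`
with `F^[m] (p^k₀ • x) = p^m • y`.  Then `x ∈ B'`. -/
theorem stmt0 (p : ℕ) [Fact p.Prime] (k : Type*) [Field k] [CharP k p] [PerfectRing k p]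
    (M : Type*) [AddCommGroup M] [Module (WittVector p k) M]
    (hptf : ∀ x : M, (p : WittVector p k) • x = 0 → x = 0)
    (F : M → M)
    (hFadd : ∀ x y : M, F (x + y) = F x + F y)
    (hFsl : ∀ (a : WittVector p k) (x : M), F (a • x) = WittVector.frobenius a • F x)
    (B' : Submodule (WittVector p k) M)
    (hFB : ∀ b ∈ B', F b ∈ B')
    (x : M) (k₀ : ℕ)
    (hx1 : ((p : WittVector p k) ^ k₀) • x ∈ B')
    (hx2 : F x - x ∈ B')
    (hx3 : ∀ m : ℕ, ∃ y ∈ B',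
      F^[m] (((p : WittVector p k) ^ k₀) • x) = ((p : WittVector p k) ^ m) • y) :
    x ∈ B' := by
  obtain ⟨y, hy, hxy⟩ := hx3 k₀
  let Fₛₗ : M →ₛₗ[WittVector.frobenius (p := p) (R := k)] M := ⟨⟨F, hFadd⟩, hFsl⟩
  have hp : IsSMulRegular M (p : WittVector p k) := .of_right_eq_zero_of_smul hptf
  exact stmt0_general Fₛₗ hFB (by simp) (hp.pow k₀) hx2 hy hxy
end

section
/- Let k be an algebraically closed field of characteristic p > 0. Define additive maps F, V : k² → k² by F(x,y) = (0, x^p) and V(x,y) = (0, x^{1/p}), where x^{1/p} denotes the unique p-th root of x in k. Then a k-linear endomorphism f of k² satisfies f ∘ F = F ∘ f and f ∘ V = V ∘ f if and only if there exist a, c ∈ k with a^{p²} = a such that f(x,y) = (a·x, c·x + a^p·y) for all (x,y) ∈ k². (This is the explicit semilinear-algebra computation underlying the paper's Lemma computing Hom_k(E[p], E[p]) for a supersingular elliptic curve E via Dieudonné modules.) -/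
/-!
Both `F` and `V` have the form `(x, y) ↦ (0, σ x)`, for `σ` the Frobenius automorphism and for its
inverse. A linear `f` with `f (1, 0) = (a, c)` commutes with such a map exactly when
`f (0, 1) = (0, σ a)`. Commuting with both therefore means `f (0, 1) = (0, σ a)` together with
`σ a = σ⁻¹ a`, and for the Frobenius the latter reads `a ^ p ^ 2 = a`.
-/

section SemilinearShift

variable {k : Type*} [CommSemiring k]

/-- The `σ`-semilinear square-zero map `(x, y) ↦ (0, σ x)` of `k²`. The maps `F` and `V` of the
Dieudonné module of a supersingular `E[p]` are the cases where `σ` is the Frobenius and its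
inverse. -/
def semilinearShift (σ : k →+* k) : k × k →ₛₗ[σ] k × k :=
  LinearMap.inr k k k ∘ₛₗ σ.toSemilinearMap ∘ₛₗ LinearMap.fst k k k

theorem semilinearShift_apply (σ : k →+* k) (z : k × k) : semilinearShift σ z = (0, σ z.1) :=
  rfl

theorem map_mk_eq_smul_add_smul {M : Type*} [AddCommMonoid M] [Module k M]
    (f : k × k →ₗ[k] M) (x y : k) :
    f (x, y) = x • f (1, 0) + y • f (0, 1) := by
  rw [← map_smul, ← map_smul, ← map_add]
  simp

theorem forall_map_mk_eq_iff (f : k × k →ₗ[k] k × k) (a c d : k) :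
    (∀ x y, f (x, y) = (a * x, c * x + d * y)) ↔ f (1, 0) = (a, c) ∧ f (0, 1) = (0, d) := by
  constructor
  · intro hf
    simp [hf]
  · rintro ⟨h₁, h₂⟩ x y
    simp [map_mk_eq_smul_add_smul f x y, h₁, h₂, mul_comm]

theorem forall_map_semilinearShift_iff (σ : k →+* k) (f : k × k →ₗ[k] k × k) :
    (∀ z, f (semilinearShift σ z) = semilinearShift σ (f z)) ↔
      f (0, 1) = (0, σ (f (1, 0)).1) := by
  simp only [semilinearShift_apply]
  constructor
  · intro hf
    simpa using hf (1, 0)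
  · rintro hf ⟨x, y⟩
    simp [map_mk_eq_smul_add_smul f x y, map_mk_eq_smul_add_smul f 0 (σ x), hf]

theorem forall_map_semilinearShift_and_symm_iff (σ : k ≃+* k) (f : k × k →ₗ[k] k × k) :
    ((∀ z, f (semilinearShift (σ : k →+* k) z) = semilinearShift (σ : k →+* k) (f z)) ∧
      ∀ z, f (semilinearShift (σ.symm : k →+* k) z) = semilinearShift (σ.symm : k →+* k) (f z)) ↔
      ∃ a c, σ (σ a) = a ∧ ∀ x y, f (x, y) = (a * x, c * x + σ a * y) := by
  simp only [forall_map_semilinearShift_iff, forall_map_mk_eq_iff, RingEquiv.coe_toRingHom]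
  constructor
  · rintro ⟨hσ, hσ_symm⟩
    have h_eq : σ (f (1, 0)).1 = σ.symm (f (1, 0)).1 :=
      congrArg Prod.snd (hσ.symm.trans hσ_symm)
    exact ⟨(f (1, 0)).1, (f (1, 0)).2, σ.eq_symm_apply.mp h_eq, rfl, hσ⟩
  · rintro ⟨a, c, ha, h₁, h₂⟩
    rw [h₁, h₂, ← σ.eq_symm_apply.mpr ha]
    exact ⟨rfl, rfl⟩

end SemilinearShift

theorem stmt1_general (p : ℕ) (k : Type*) [CommSemiring k] [ExpChar k p] [PerfectRing k p]
    (Fmap Vmap : k × k → k × k)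
    (hFmap : ∀ z : k × k, Fmap z = (0, z.1 ^ p))
    (hVmap : ∀ z : k × k, (Vmap z).1 = 0 ∧ ((Vmap z).2) ^ p = z.1)
    (f : (k × k) →ₗ[k] (k × k)) :
    ((∀ z : k × k, f (Fmap z) = Fmap (f z)) ∧ (∀ z : k × k, f (Vmap z) = Vmap (f z))) ↔
      ∃ a c : k, a ^ (p ^ 2) = a ∧
        ∀ x y : k, f (x, y) = (a * x, c * x + a ^ p * y) := by
  have hF : Fmap = semilinearShift (frobeniusEquiv k p : k →+* k) := funext hFmap
  have hV : Vmap = semilinearShift ((frobeniusEquiv k p).symm : k →+* k) := by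
    funext z
    exact Prod.ext (hVmap z).1 ((frobeniusEquiv k p).eq_symm_apply.mpr (hVmap z).2)
  rw [hF, hV, forall_map_semilinearShift_and_symm_iff]
  simp only [frobeniusEquiv_apply, frobenius_def, ← pow_mul, ← pow_two]

/-- Let `k` be an algebraically closed field of characteristic `p > 0`.
Define additive maps `F, V : k² → k²` by `F (x, y) = (0, x^p)` and
`V (x, y) = (0, x^{1/p})` (here `V` is characterized by `(V z).1 = 0` and
`((V z).2)^p = z.1`, which pins down the unique `p`-th root).  Then a `k`-linear
endomorphism `f` of `k²` commutes with `F` and `V` iff there are `a, c ∈ k` with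
`a^{p²} = a` such that `f (x, y) = (a·x, c·x + a^p·y)` for all `x, y`. -/
theorem stmt1 (p : ℕ) [Fact p.Prime] (k : Type*) [Field k] [IsAlgClosed k] [CharP k p]
    (Fmap Vmap : k × k → k × k)
    (hFmap : ∀ z : k × k, Fmap z = (0, z.1 ^ p))
    (hVmap : ∀ z : k × k, (Vmap z).1 = 0 ∧ ((Vmap z).2) ^ p = z.1)
    (f : (k × k) →ₗ[k] (k × k)) :
    ((∀ z : k × k, f (Fmap z) = Fmap (f z)) ∧ (∀ z : k × k, f (Vmap z) = Vmap (f z))) ↔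
      ∃ a c : k, a ^ (p ^ 2) = a ∧
        ∀ x y : k, f (x, y) = (a * x, c * x + a ^ p * y) :=
  stmt1_general p k Fmap Vmap hFmap hVmap f
end

section
/- Let k be an algebraically closed field of characteristic p > 0, and define F, V : k² → k² by F(x,y) = (0, x^p) and V(x,y) = (0, x^{1/p}). Then the set E of k-linear endomorphisms f of k² satisfying f ∘ F = F ∘ f and f ∘ V = V ∘ f is an additive subgroup of End_k(k²), the map sending f to the pair (a, c) defined by f(1,0) = (a,c) is an isomorphism of additive groups from E onto {a ∈ k : a^{p²} = a} × k, and the additive group {a ∈ k : a^{p²} = a} is isomorphic to (ℤ/pℤ)²; hence E ≅ (ℤ/pℤ)² ⊕ k as an abelian group. (This is the paper's Lemma that Hom_k(E[p],E[p]) ≅ (ℤ/p)² ⊕ k for a supersingular elliptic curve E.) -/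
/-!
Let `σ` and `τ` be ring endomorphisms of `R`. A linear endomorphism `f` of `R²` commutes with
`(x, y) ↦ (0, σ x)` exactly when `f (0, 1) = (0, σ a)`, where `f (1, 0) = (a, c)`. Hence an `f`
commuting with the maps attached to both `σ` and `τ` is determined by `(a, c)`, where `c` is
arbitrary and `a` is subject only to `σ a = τ a`. For `σ` the Frobenius and `τ` its inverse this
equation reads `a ^ p ^ 2 = a`; its solutions are the roots of a separable polynomial of degree
`p ^ 2` and form a vector space over `ZMod p`, which is therefore a plane.
-/

open Polynomial

section Commutant

variable {R M : Type*} [Ring R] [AddCommGroup M] [Module R M]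

variable (R) in
/-- The additive group of `R`-linear endomorphisms of `M` commuting with a map `T` that is only
assumed additive, so that semilinear maps such as Frobenius and Verschiebung are covered. -/
def commutant (T : M →+ M) : AddSubgroup (M →ₗ[R] M) where
  carrier := {f | ∀ z, f (T z) = T (f z)}
  zero_mem' _ := by simp
  add_mem' hf hg z := by simp [hf z, hg z]
  neg_mem' hf z := by simp [hf z]

/-- The `σ`-semilinear map `(x, y) ↦ (0, σ x)` on `R²`, the common shape of Frobenius and
Verschiebung on the Dieudonné module of the `p`-torsion of a supersingular elliptic curve. -/
def nilpotentShift (σ : R →+* R) : R × R →+ R × R :=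
  (AddMonoidHom.inr R R).comp ((σ : R →+ R).comp (AddMonoidHom.fst R R))

@[simp]
lemma nilpotentShift_apply (σ : R →+* R) (z : R × R) : nilpotentShift σ z = (0, σ z.1) := rfl

lemma linearMap_prod_apply_eq_smul_add_smul (f : R × R →ₗ[R] M) (z : R × R) :
    f z = z.1 • f (1, 0) + z.2 • f (0, 1) := by
  rw [← map_smul, ← map_smul, ← map_add]
  simp

lemma mem_commutant_nilpotentShift_iff {σ : R →+* R} {f : R × R →ₗ[R] R × R} :
    f ∈ commutant R (nilpotentShift σ) ↔ f (0, 1) = (0, σ (f (1, 0)).1) := by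
  constructor
  · intro hf
    simpa using hf (1, 0)
  · intro hf z
    rw [linearMap_prod_apply_eq_smul_add_smul f (nilpotentShift σ z),
      linearMap_prod_apply_eq_smul_add_smul f z, hf]
    simp

/-- Evaluation at `(1, 0)` as an isomorphism; its inverse sends `(a, c)` to the endomorphism with
columns `(a, c)` and `(0, σ a)`. -/
def commutantInfEquivEqLocusProd (σ τ : R →+* R) :
    ↥(commutant R (nilpotentShift σ) ⊓ commutant R (nilpotentShift τ)) ≃+
      (σ : R →+ R).eqLocus (τ : R →+ R) × R where
  toFun f := (⟨(f.1 (1, 0)).1, by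
    have hσ := mem_commutant_nilpotentShift_iff.1 f.2.1
    have hτ := mem_commutant_nilpotentShift_iff.1 f.2.2
    exact congrArg Prod.snd (hσ.symm.trans hτ)⟩, (f.1 (1, 0)).2)
  invFun q := ⟨(LinearMap.toSpanSingleton R (R × R) (q.1.1, q.2)).coprod
      (LinearMap.toSpanSingleton R (R × R) (0, σ q.1.1)), by
    have hq : σ q.1.1 = τ q.1.1 := q.1.2
    constructor <;> refine mem_commutant_nilpotentShift_iff.2 ?_ <;> simp [hq]⟩
  left_inv f := by
    have hσ := mem_commutant_nilpotentShift_iff.1 f.2.1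
    ext1
    refine LinearMap.ext fun z ↦ ?_
    rw [linearMap_prod_apply_eq_smul_add_smul f.1 z, hσ]
    rfl
  right_inv q := by ext <;> simp
  map_add' _ _ := rfl

end Commutant

section FrobeniusFixed

variable {k : Type*} [CommRing k] (p : ℕ)

lemma mem_eqLocus_frobenius_symm_iff [ExpChar k p] [PerfectRing k p] (a : k) :
    a ∈ (frobenius k p : k →+ k).eqLocus ((frobeniusEquiv k p).symm : k →+* k) ↔
      a ^ p ^ 2 = a := by
  calc frobenius k p a = (frobeniusEquiv k p).symm a
      ↔ frobeniusEquiv k p (frobenius k p a) = a := RingEquiv.eq_symm_apply _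
    _ ↔ a ^ p ^ 2 = a := by rw [frobeniusEquiv_def, frobenius_def, ← pow_mul, ← sq]

lemma natCard_pow_eq_self {q : ℕ} [IsDomain k] [CharP k p] (hpq : p ∣ q) (hq : 1 < q)
    (hsplits : (X ^ q - X : k[X]).Splits) : Nat.card {a : k // a ^ q = a} = q := by
  classical
  have natDegree_eq : (X ^ q - X : k[X]).natDegree = q := by
    rw [natDegree_sub_eq_left_of_natDegree_lt] <;> simp [hq]
  have ne_zero : (X ^ q - X : k[X]) ≠ 0 := ne_zero_of_natDegree_gt (hq.trans_eq natDegree_eq.symm)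
  have nodup_roots : (X ^ q - X : k[X]).roots.Nodup :=
    nodup_roots (galois_poly_separable p q hpq)
  have mem_roots_iff (a : k) : a ∈ (X ^ q - X : k[X]).roots.toFinset ↔ a ^ q = a := by
    simp [ne_zero, sub_eq_zero]
  calc Nat.card {a : k // a ^ q = a}
      = (X ^ q - X : k[X]).roots.toFinset.card := Nat.subtype_card _ mem_roots_iff
    _ = (X ^ q - X : k[X]).roots.card := Multiset.toFinset_card_of_nodup nodup_roots
    _ = q := by rw [← hsplits.natDegree_eq_card_roots, natDegree_eq]

end FrobeniusFixed

section ElementaryAbelian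

variable {G : Type*} [AddCommGroup G] (p : ℕ) [Fact p.Prime]

lemma nonempty_linearEquiv_pi_zmod_of_natCard_eq [Module (ZMod p) G] {n : ℕ}
    (hcard : Nat.card G = p ^ n) : Nonempty (G ≃ₗ[ZMod p] (Fin n → ZMod p)) := by
  have : Finite G := Nat.finite_of_card_ne_zero (hcard ▸ pow_ne_zero n (NeZero.ne p))
  have finrank_eq : Module.finrank (ZMod p) G = n :=
    Nat.pow_right_injective (Fact.out : p.Prime).two_le <|
      (FiniteField.pow_finrank_eq_natCard p G).trans hcard
  exact ⟨(Module.finBasisOfFinrankEq (ZMod p) G finrank_eq).equivFun⟩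

lemma nonempty_addEquiv_zmod_prod_zmod_of_natCard_eq (hexp : ∀ g : G, p • g = 0)
    (hcard : Nat.card G = p ^ 2) : Nonempty (G ≃+ ZMod p × ZMod p) := by
  let _ : Module (ZMod p) G := AddCommGroup.zmodModule hexp
  obtain ⟨e⟩ := nonempty_linearEquiv_pi_zmod_of_natCard_eq p hcard
  exact ⟨(e.trans (LinearEquiv.finTwoArrow (ZMod p) (ZMod p))).toAddEquiv⟩

end ElementaryAbelian

theorem stmt2_general (p : ℕ) [Fact p.Prime] (k : Type*) [CommRing k] [IsDomain k] [CharP k p]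
    (hsplits : (X ^ p ^ 2 - X : k[X]).Splits)
    (Fmap Vmap : k × k → k × k)
    (hFmap : ∀ z : k × k, Fmap z = (0, z.1 ^ p))
    (hVmap : ∀ z : k × k, (Vmap z).1 = 0 ∧ ((Vmap z).2) ^ p = z.1) :
    ∃ E : AddSubgroup ((k × k) →ₗ[k] (k × k)),
      (∀ f : (k × k) →ₗ[k] (k × k),
          f ∈ E ↔ (∀ z : k × k, f (Fmap z) = Fmap (f z)) ∧
                  (∀ z : k × k, f (Vmap z) = Vmap (f z))) ∧
      ∃ A : AddSubgroup k,
        (∀ a : k, a ∈ A ↔ a ^ (p ^ 2) = a) ∧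
        (∃ φ : E ≃+ A × k, ∀ f : E,
            (((φ f).1 : k) = ((f : (k × k) →ₗ[k] (k × k)) (1, 0)).1) ∧
            ((φ f).2 = ((f : (k × k) →ₗ[k] (k × k)) (1, 0)).2)) ∧
        Nonempty (A ≃+ (ZMod p × ZMod p)) ∧
        Nonempty (E ≃+ ((ZMod p × ZMod p) × k)) := by
  have : PerfectRing k p := .ofSurjective k p fun x ↦ ⟨(Vmap (x, 0)).2, (hVmap (x, 0)).2⟩
  let σ : k →+* k := frobenius k p
  let τ : k →+* k := ((frobeniusEquiv k p).symm : k →+* k)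
  have hF : Fmap = nilpotentShift σ := funext hFmap
  have hV : Vmap = nilpotentShift τ := funext fun z ↦
    Prod.ext (hVmap z).1 ((RingEquiv.eq_symm_apply (frobeniusEquiv k p)).2 (hVmap z).2)
  let A : AddSubgroup k := (σ : k →+ k).eqLocus (τ : k →+ k)
  have mem_A (a : k) : a ∈ A ↔ a ^ p ^ 2 = a := mem_eqLocus_frobenius_symm_iff p a
  have card_A : Nat.card A = p ^ 2 :=
    (Nat.card_congr (Equiv.subtypeEquivRight mem_A)).trans <|
      natCard_pow_eq_self p (dvd_pow_self p two_ne_zero)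
        (Nat.one_lt_pow two_ne_zero (Fact.out : p.Prime).one_lt) hsplits
  obtain ⟨e⟩ :=
    nonempty_addEquiv_zmod_prod_zmod_of_natCard_eq p (fun a : A ↦ by ext; simp) card_A
  let φ := commutantInfEquivEqLocusProd σ τ
  subst hF hV
  exact ⟨_, fun f ↦ Iff.rfl, A, mem_A, ⟨φ, fun f ↦ ⟨rfl, rfl⟩⟩, ⟨e⟩,
    ⟨φ.trans (e.prodCongr (AddEquiv.refl k))⟩⟩

/-- With `F, V : k² → k²` as in the Dieudonné module of the `p`-torsion
of a supersingular elliptic curve (`F (x,y) = (0, x^p)`, `V (x,y) = (0, x^{1/p})`), the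
set `E` of `k`-linear endomorphisms of `k²` commuting with `F` and `V` is an additive
subgroup of `End_k(k²)`; the map `f ↦ (a, c)` with `f (1,0) = (a, c)` is an additive
group isomorphism of `E` onto `{a : a^{p²} = a} × k`; the additive group
`{a : a^{p²} = a}` is isomorphic to `(ℤ/p)²`; hence `E ≅ (ℤ/p)² ⊕ k`. -/
theorem stmt2 (p : ℕ) [Fact p.Prime] (k : Type*) [Field k] [IsAlgClosed k] [CharP k p]
    (Fmap Vmap : k × k → k × k)
    (hFmap : ∀ z : k × k, Fmap z = (0, z.1 ^ p))
    (hVmap : ∀ z : k × k, (Vmap z).1 = 0 ∧ ((Vmap z).2) ^ p = z.1) :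
    ∃ E : AddSubgroup ((k × k) →ₗ[k] (k × k)),
      (∀ f : (k × k) →ₗ[k] (k × k),
          f ∈ E ↔ (∀ z : k × k, f (Fmap z) = Fmap (f z)) ∧
                  (∀ z : k × k, f (Vmap z) = Vmap (f z))) ∧
      ∃ A : AddSubgroup k,
        (∀ a : k, a ∈ A ↔ a ^ (p ^ 2) = a) ∧
        (∃ φ : E ≃+ A × k, ∀ f : E,
            (((φ f).1 : k) = ((f : (k × k) →ₗ[k] (k × k)) (1, 0)).1) ∧
            ((φ f).2 = ((f : (k × k) →ₗ[k] (k × k)) (1, 0)).2)) ∧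
        Nonempty (A ≃+ (ZMod p × ZMod p)) ∧
        Nonempty (E ≃+ ((ZMod p × ZMod p) × k)) := by
  exact stmt2_general p k (IsAlgClosed.splits _) Fmap Vmap hFmap hVmap
end

section
/- Let k be an algebraically closed field of characteristic p > 0, and let V and V' be finite-dimensional k-vector spaces. Let u : V → V' be a surjective additive map that is Frobenius-semilinear, i.e. u(a·v) = a^p·u(v) for all a ∈ k and v ∈ V, and let w : V → V' be a k-linear map. Then the additive map u − w : V → V' is surjective. (This semilinear-algebra fact is the engine of the paper's proof that W* − C : H^{i−2}(X, ZΩ¹_X) → H^{i−2}(X^{(p)}, Ω¹_{X^{(p)}}) is surjective in its injectivity criterion for the map from flat to crystalline cohomology.) -/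
/-!
If `w` is surjective, composing with a linear section of `w` reduces the claim to solving
`x - F x = v` for a semilinear endomorphism `F` of a finite-dimensional space. Writing
`F^m v = ∑_{i<m} c i • F^i v` and looking for `x` in the span of the `F^i v`, all coordinates
become polynomials in one unknown `t`, subject to one equation `P(t) = t`. Only `q`-th powers
occur in `P`, so `P - X` has derivative `-1` and is separable; it has a root over any separably
closed field.

If `w` is not surjective, then `u` restricts to a surjection `u⁻¹(range w) → range w`, so by
induction on the dimension of the target the image of `u - w` contains `range w`. Every `y = u v`
differs from `(u - w) v` by `w v`, so it lies in the image as well.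
-/

open Polynomial

theorem exists_sum_range_smul_eq {R M : Type*} [Ring R] [AddCommGroup M] [Module R M]
    [IsNoetherian R M] (b : ℕ → M) :
    ∃ (m : ℕ) (c : ℕ → R), ∑ i ∈ Finset.range m, c i • b i = b m := by
  let spanBelow : ℕ →o Submodule R M :=
    ⟨fun n ↦ Submodule.span R (b '' (Finset.range n : Set ℕ)), fun _ _ hle ↦
      Submodule.span_mono (Set.image_mono (Finset.coe_subset.2 (Finset.range_mono hle)))⟩
  obtain ⟨m, hstable⟩ := monotone_stabilizes_iff_noetherian.2 ‹IsNoetherian R M› spanBelow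
  have hmem : b m ∈ spanBelow m := by
    rw [hstable (m + 1) m.le_succ]
    exact Submodule.subset_span ⟨m, by simp, rfl⟩
  obtain ⟨c, hc⟩ := (Submodule.mem_span_image_finset_iff_exists_fun' R).1 hmem
  exact ⟨m, c, hc⟩

theorem exists_eval_eq_self_of_derivative_eq_zero {k : Type*} [Field k] [IsSepClosed k]
    {P : k[X]} (hP : derivative P = 0) : ∃ t, P.eval t = t := by
  have hder : derivative (P - X) = -1 := by simp [hP]
  have hsep : (P - X).Separable := by
    rw [separable_def, hder]
    exact isCoprime_one_right.neg_right
  have hdeg : (P - X).degree ≠ 0 := fun h ↦ by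
    rw [eq_C_of_degree_eq_zero h, derivative_C] at hder
    exact neg_ne_zero.2 one_ne_zero hder.symm
  obtain ⟨t, ht⟩ := IsSepClosed.exists_root _ hdeg hsep
  exact ⟨t, by simpa [sub_eq_zero] using ht⟩

section CyclicCoordinates

variable {R : Type*} [CommRing R] {q : ℕ}

/-- The coordinates of a solution of `x - F x = v` on the cyclic span of `v`, where `F` is
`q`-semilinear and `F^m v = ∑_{i<m} c i • F^i v`, as polynomials in the top coordinate: the
coefficient of `F^i v` is the polynomial of index `i + 1`. Index `0` is the value `1` that makes
the recursion uniform. -/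
noncomputable def cyclicCoordPoly (q : ℕ) (c : ℕ → R) : ℕ → R[X]
  | 0 => 1
  | i + 1 => cyclicCoordPoly q c i ^ q + C (c i) * X ^ q

theorem derivative_cyclicCoordPoly (hq : (q : R) = 0) (c : ℕ → R) (i : ℕ) :
    derivative (cyclicCoordPoly q c i) = 0 := by
  cases i <;> simp [cyclicCoordPoly, derivative_pow, hq]

theorem eval_cyclicCoordPoly_succ (c : ℕ → R) (i : ℕ) (t : R) :
    (cyclicCoordPoly q c (i + 1)).eval t =
      (cyclicCoordPoly q c i).eval t ^ q + c i * t ^ q := by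
  simp [cyclicCoordPoly]

theorem sum_cyclicCoordPoly_smul_sub_map {σ : R →+* R} (hσ : ∀ a, σ a = a ^ q) {M : Type*}
    [AddCommGroup M] [Module R M] (F : M →ₛₗ[σ] M) {b : ℕ → M}
    (hb : ∀ i, F (b i) = b (i + 1)) {m : ℕ} {c : ℕ → R}
    (hc : ∑ i ∈ Finset.range m, c i • b i = b m) {t : R}
    (ht : (cyclicCoordPoly q c m).eval t = t) :
    ∑ i ∈ Finset.range m, (cyclicCoordPoly q c (i + 1)).eval t • b i -
      F (∑ i ∈ Finset.range m, (cyclicCoordPoly q c (i + 1)).eval t • b i) = b 0 := by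
  set x : ℕ → R := fun i ↦ (cyclicCoordPoly q c i).eval t
  have hx0 : x 0 = 1 := by simp [x, cyclicCoordPoly]
  calc ∑ i ∈ Finset.range m, x (i + 1) • b i - F (∑ i ∈ Finset.range m, x (i + 1) • b i)
    _ = ∑ i ∈ Finset.range m, (x (i + 1) • b i - x (i + 1) ^ q • b (i + 1)) := by
      simp only [map_sum, LinearMap.map_smulₛₗ, hσ, hb, Finset.sum_sub_distrib]
    _ = ∑ i ∈ Finset.range m,
          (x i ^ q • b i - x (i + 1) ^ q • b (i + 1) + t ^ q • c i • b i) := by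
      refine Finset.sum_congr rfl fun i _ ↦ ?_
      have hx : x (i + 1) = x i ^ q + c i * t ^ q := eval_cyclicCoordPoly_succ c i t
      nth_rw 1 [hx]
      module
    _ = x 0 ^ q • b 0 - x m ^ q • b m + t ^ q • b m := by
      rw [Finset.sum_add_distrib, Finset.sum_range_sub' (fun i ↦ x i ^ q • b i),
        ← Finset.smul_sum, hc]
    _ = b 0 := by
      rw [hx0, show x m = t from ht, one_pow, one_smul, sub_add_cancel]

end CyclicCoordinates

section SemilinearEquation

variable {k : Type*} [Field k] [IsSepClosed k] {q : ℕ} {σ : k →+* k} {V V' : Type*}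
  [AddCommGroup V] [Module k V] [AddCommGroup V'] [Module k V']

theorem surjective_id_sub_semilinear [FiniteDimensional k V] (hq : (q : k) = 0)
    (hσ : ∀ a, σ a = a ^ q) (F : V →ₛₗ[σ] V) : Function.Surjective (fun v ↦ v - F v) := by
  intro y
  let b : ℕ → V := fun i ↦ F^[i] y
  have hb (i : ℕ) : F (b i) = b (i + 1) := (Function.iterate_succ_apply' F i y).symm
  obtain ⟨m, c, hc⟩ := exists_sum_range_smul_eq (R := k) b
  obtain ⟨t, ht⟩ :=
    exists_eval_eq_self_of_derivative_eq_zero (derivative_cyclicCoordPoly hq c m)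
  exact ⟨_, sum_cyclicCoordPoly_smul_sub_map hσ F hb hc ht⟩

theorem surjective_semilinear_sub_of_surjective_linear [FiniteDimensional k V']
    (hq : (q : k) = 0) (hσ : ∀ a, σ a = a ^ q) (u : V →ₛₗ[σ] V') {w : V →ₗ[k] V'}
    (hw : Function.Surjective w) : Function.Surjective (fun v ↦ u v - w v) := by
  obtain ⟨s, hs⟩ := w.exists_rightInverse_of_surjective (LinearMap.range_eq_top.2 hw)
  intro y
  obtain ⟨z, hz⟩ := surjective_id_sub_semilinear hq hσ (u.comp s) (-y)
  have hwz : w (s z) = z := LinearMap.congr_fun hs z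
  have hsub : z - u (s z) = -y := hz
  exact ⟨s z, by simp only [hwz, ← neg_sub z, hsub, neg_neg]⟩

end SemilinearEquation

theorem stmt3_general {k : Type*} [Field k] [IsSepClosed k] {q : ℕ} (hq : (q : k) = 0)
    {σ : k →+* k} (hσ : ∀ a, σ a = a ^ q) {V V' : Type*} [AddCommGroup V] [Module k V]
    [AddCommGroup V'] [Module k V'] [FiniteDimensional k V'] (u : V →ₛₗ[σ] V')
    (hu : Function.Surjective u) (w : V →ₗ[k] V') :
    Function.Surjective (fun v ↦ u v - w v) := by
  induction hn : Module.finrank k V' using Nat.strong_induction_on generalizing V V' with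
  | _ n ih =>
    by_cases hw : Function.Surjective w
    · exact surjective_semilinear_sub_of_surjective_linear hq hσ u hw
    let W : Submodule k V := w.range.comap u
    let uW : W →ₛₗ[σ] w.range := u.restrict fun _ hv ↦ hv
    let wW : W →ₗ[k] w.range := w.rangeRestrict.domRestrict W
    have huW : Function.Surjective uW := hu.restrictPreimage _
    have hlt : Module.finrank k w.range < n :=
      hn ▸ Submodule.finrank_lt (mt LinearMap.range_eq_top.1 hw)
    intro y
    obtain ⟨v, rfl⟩ := hu y
    obtain ⟨z, hz⟩ := ih _ hlt uW huW wW rfl (w.rangeRestrict v)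
    refine ⟨v + z, ?_⟩
    have huz : u z - w z = w v := congrArg Subtype.val hz
    simp only [map_add, ← huz]
    abel

/-- Let `k` be an algebraically closed field of characteristic `p > 0`,
`V` and `V'` finite-dimensional `k`-vector spaces, `u : V → V'` a surjective additive
Frobenius-semilinear map (`u (a • v) = a^p • u v`), and `w : V →ₗ[k] V'` a `k`-linear
map.  Then `u − w` is surjective. -/
theorem stmt3 (p : ℕ) [Fact p.Prime] (k : Type*) [Field k] [IsAlgClosed k] [CharP k p]
    (V V' : Type*) [AddCommGroup V] [Module k V] [FiniteDimensional k V]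
    [AddCommGroup V'] [Module k V'] [FiniteDimensional k V']
    (u : V → V')
    (huadd : ∀ a b : V, u (a + b) = u a + u b)
    (husl : ∀ (a : k) (v : V), u (a • v) = a ^ p • u v)
    (husurj : Function.Surjective u)
    (w : V →ₗ[k] V') :
    Function.Surjective (fun v : V => u v - w v) :=
  let uₛ : V →ₛₗ[frobenius k p] V' := ⟨⟨u, huadd⟩, husl⟩
  stmt3_general (CharP.cast_eq_zero k p) (frobenius_def p) uₛ husurj w
end

section
/- Let k be an algebraically closed field of characteristic p > 0, W = W(k) its ring of p-typical Witt vectors with Frobenius σ, and let M be a finite free W-module equipped with an additive σ-semilinear map F : M → M. Then the map 1 − F : M → M is surjective, and its kernel M^{F=1} is a free ℤ_p-module of finite rank at most the W-rank of M. (This is the assertion, made in the paper's treatment of K3 surfaces of finite height, that 1 − F is surjective on the finitely generated free W-modules H^i(X, WΩ¹) with kernel a free ℤ_p-module of finite rank.) -/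
/-!
Surjectivity. Given `y`, a relation `F^{n+1} y = ∑_{i ≤ n} c_i F^i y` turns the equation
`x - F x = y` for `x = ∑_{i ≤ n} a_i F^i y` into a recursion that expresses every `a_i` through
`t = a_n` and is closed by a single condition on `t`. Modulo `p` this condition reads `P(t) = t`
with `P` a polynomial in `t ^ p`, so `P - X` has derivative `-1` and a root exists. Hence `1 - F`
is surjective modulo `p`; being linear over the fixed ring of `σ`, which contains `p`, it is
surjective by `p`-adic completeness.

Kernel. By Nakayama's lemma the `W(k)`-span of `M^{F=1}` has a basis consisting of elements of
`M^{F=1}`. Comparing coefficients in `F x = x` shows that the coordinates of a fixed vector in that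
basis are fixed by `σ`, so the same elements form a basis of `M^{F=1}` over `W(k)^σ = W(𝔽_p)`.
-/

open Polynomial

theorem isAdicComplete_of_finite {R : Type*} [CommRing R] [IsNoetherianRing R] (I : Ideal R)
    [IsAdicComplete I R] (M : Type*) [AddCommGroup M] [Module R M] [Module.Finite R M] :
    IsAdicComplete I M := by
  have : IsHausdorff I M := .of_le_jacobson I M (IsAdicComplete.le_jacobson_bot I)
  have : IsPrecomplete I M := by
    rw [← AdicCompletion.of_surjective_iff, ← LinearMap.range_eq_top, eq_top_iff]
    rintro y -
    obtain ⟨t, rfl⟩ := AdicCompletion.ofTensorProduct_surjective_of_finite I M y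
    induction t with
    | zero => rw [map_zero]; exact zero_mem _
    | add s t hs ht => rw [map_add]; exact add_mem hs ht
    | tmul a x =>
      obtain ⟨r, rfl⟩ := AdicCompletion.of_surjective I R a
      refine ⟨r • x, ?_⟩
      rw [AdicCompletion.ofTensorProduct_tmul, map_smul]
      exact (algebraMap_smul (AdicCompletion I R) r (AdicCompletion.of I M x)).symm
  constructor

/-- The coefficients `a_i` of the solution `∑ a_i F^i y` of `x - F x = y`, obtained by comparing
coefficients of `F^i y` when `F^{n+1} y = ∑_{i ≤ n} c_i F^i y`. Here `s` stands for `φ (a_n)`, and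
`φ` is a bare function so that the definition covers both a ring endomorphism and the `q`-th
power map. -/
def twistedCoeff {R : Type*} [Semiring R] (φ : R → R) (c : ℕ → R) (s : R) : ℕ → R
  | 0 => 1 + c 0 * s
  | n + 1 => φ (twistedCoeff φ c s n) + c (n + 1) * s

theorem map_twistedCoeff {R S : Type*} [Semiring R] [Semiring S] (f : R →+* S) {φ : R → R}
    {ψ : S → S} (h : ∀ a, f (φ a) = ψ (f a)) (c : ℕ → R) (s : R) (n : ℕ) :
    f (twistedCoeff φ c s n) = twistedCoeff ψ (f ∘ c) (f s) n := by
  induction n with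
  | zero => simp [twistedCoeff]
  | succ n ih => simp [twistedCoeff, h, ih]

theorem derivative_twistedCoeff_pow {k : Type*} [CommSemiring k] {q : ℕ} (hq : (q : k) = 0)
    (c : ℕ → k) (n : ℕ) :
    derivative (twistedCoeff (· ^ q) (C ∘ c) (X ^ q : k[X]) n) = 0 := by
  cases n <;> simp [twistedCoeff, derivative_pow, hq]

theorem exists_twistedCoeff_pow_eq_self {k : Type*} [Field k] [IsSepClosed k] {q : ℕ}
    (hq : (q : k) = 0) (c : ℕ → k) (n : ℕ) :
    ∃ t : k, twistedCoeff (· ^ q) c (t ^ q) n = t := by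
  let P : k[X] := twistedCoeff (· ^ q) (C ∘ c) (X ^ q) n
  have hderiv : derivative (P - X) = -1 := by
    rw [derivative_sub, derivative_twistedCoeff_pow hq, derivative_X, zero_sub]
  have hdeg : (P - X).degree ≠ 0 := fun h ↦ by
    rw [eq_C_of_degree_eq_zero h, derivative_C] at hderiv
    simp at hderiv
  have hsep : (P - X).Separable := by
    rw [separable_def, hderiv]
    exact isCoprime_one_right.neg_right
  obtain ⟨t, ht⟩ := IsSepClosed.exists_root _ hdeg hsep
  have heval : P.eval t = twistedCoeff (· ^ q) c (t ^ q) n := by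
    simpa [P, Function.comp_def] using
      map_twistedCoeff (evalRingHom t) (ψ := (· ^ q)) (by simp) (C ∘ c) (X ^ q) n
  exact ⟨t, by simpa [sub_eq_zero, heval] using ht⟩

section Semilinear

variable {R M : Type*} [CommRing R] [AddCommGroup M] [Module R M] {σ : R →+* R}

theorem sum_twistedCoeff_sub_map (F : M →ₛₗ[σ] M) (c : ℕ → R) (s : R) (y : M) (n : ℕ) :
    ∑ i ∈ Finset.range (n + 1), twistedCoeff σ c s i • F^[i] y -
        F (∑ i ∈ Finset.range (n + 1), twistedCoeff σ c s i • F^[i] y) =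
      y + s • ∑ i ∈ Finset.range (n + 1), c i • F^[i] y -
        σ (twistedCoeff σ c s n) • F^[n + 1] y := by
  induction n with
  | zero =>
    simp only [zero_add, Finset.sum_range_one, Function.iterate_zero_apply, map_smulₛₗ,
      Function.iterate_one, twistedCoeff]
    module
  | succ n ih =>
    rw [Finset.sum_range_succ _ (n + 1), Finset.sum_range_succ _ (n + 1), map_add, map_smulₛₗ,
      add_sub_add_comm, ih, ← Function.iterate_succ_apply' F]
    have hrec : twistedCoeff σ c s (n + 1) = σ (twistedCoeff σ c s n) + c (n + 1) * s := rfl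
    linear_combination (norm := module) hrec • F^[n + 1] y

theorem exists_succ_eq_sum_smul [IsNoetherian R M] (u : ℕ → M) :
    ∃ (n : ℕ) (c : ℕ → R), u (n + 1) = ∑ i ∈ Finset.range (n + 1), c i • u i := by
  let N : ℕ →o Submodule R M :=
    ⟨fun n ↦ Submodule.span R (u '' Set.Iio n), fun _ _ h ↦
      Submodule.span_mono (Set.image_mono (Set.Iio_subset_Iio h))⟩
  obtain ⟨n, hn⟩ := monotone_stabilizes_iff_noetherian.2 ‹_› N
  have hmem : u (n + 1) ∈ N (n + 1) := by
    rw [← hn (n + 1) (by lia), hn (n + 2) (by lia)]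
    exact Submodule.subset_span ⟨n + 1, by simp, rfl⟩
  obtain ⟨c, hc, hcu⟩ := (Finsupp.mem_span_image_iff_linearCombination R).1 hmem
  refine ⟨n, c, ?_⟩
  rw [← hcu, Finsupp.linearCombination_apply]
  refine Finsupp.sum_of_support_subset c (fun i hi ↦ ?_) _ (by simp)
  simpa using hc hi

theorem exists_sub_mem_ker_smul_top {k : Type*} [Field k] [IsSepClosed k] {π : R →+* k}
    (hπ : Function.Surjective π) {q : ℕ} (hq : (q : k) = 0) (hσ : ∀ a, π (σ a) = π a ^ q)
    [IsNoetherian R M] (F : M →ₛₗ[σ] M) (y : M) :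
    ∃ x, y - (x - F x) ∈ (RingHom.ker π • ⊤ : Submodule R M) := by
  obtain ⟨n, c, hc⟩ := exists_succ_eq_sum_smul (R := R) fun i ↦ F^[i] y
  obtain ⟨t, ht⟩ := exists_twistedCoeff_pow_eq_self hq (π ∘ c) n
  obtain ⟨T, rfl⟩ := hπ t
  let a := twistedCoeff σ c (σ T)
  have ha : π (a n) = π T := by
    rw [map_twistedCoeff (ψ := (· ^ q)) π hσ, hσ, ht]
  have hσa : σ (a n - T) ∈ RingHom.ker π := by
    rw [RingHom.mem_ker, map_sub σ, map_sub π, hσ, hσ, ha, sub_self]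
  refine ⟨∑ i ∈ Finset.range (n + 1), a i • F^[i] y, ?_⟩
  have hdefect : y - (∑ i ∈ Finset.range (n + 1), a i • F^[i] y -
      F (∑ i ∈ Finset.range (n + 1), a i • F^[i] y)) = σ (a n - T) • F^[n + 1] y := by
    rw [sum_twistedCoeff_sub_map, ← hc, map_sub]
    module
  rw [hdefect]
  exact Submodule.smul_mem_smul hσa Submodule.mem_top

/-- The subring `R^σ` of elements fixed by `σ`. -/
abbrev fixedSubring (σ : R →+* R) : Subring R := σ.eqLocus (RingHom.id R)

/-- The map `1 - F` as a linear map over the fixed subring of `σ`; its kernel is `M^{F=1}`. -/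
def idSub (F : M →ₛₗ[σ] M) : M →ₗ[fixedSubring σ] M where
  toFun x := x - F x
  map_add' x y := by rw [map_add, add_sub_add_comm]
  map_smul' a x := by
    have ha : σ a = a := a.2
    rw [Subring.smul_def, map_smulₛₗ, ha, ← smul_sub, RingHom.id_apply, Subring.smul_def]

theorem mem_ker_idSub {F : M →ₛₗ[σ] M} {x : M} : x ∈ (idSub F).ker ↔ F x = x := by
  rw [LinearMap.mem_ker, eq_comm (a := F x)]
  exact sub_eq_zero

theorem idSub_surjective_of_frobenius_lift {k : Type*} [Field k] [IsSepClosed k] {π : R →+* k}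
    (hπ : Function.Surjective π) {q : ℕ} (hq : (q : k) = 0) (hσ : ∀ a, π (σ a) = π a ^ q)
    {J : Ideal (fixedSubring σ)} (hJ : J.map (algebraMap _ R) = RingHom.ker π)
    [IsNoetherian R M] [IsAdicComplete (RingHom.ker π) M] (F : M →ₛₗ[σ] M) :
    Function.Surjective (idSub F) := by
  have : IsAdicComplete J M := by
    rw [← IsAdicComplete.map_algebraMap_iff (S := R), hJ]
    infer_instance
  have hsmul : J • (⊤ : Submodule (fixedSubring σ) M) =
      (RingHom.ker π • ⊤ : Submodule R M).restrictScalars _ := by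
    rw [← hJ, Submodule.restrictScalars_map_smul_eq, Submodule.restrictScalars_top]
  refine surjective_of_mkQ_comp_surjective (I := J) fun y ↦ ?_
  obtain ⟨y, rfl⟩ := Submodule.mkQ_surjective _ y
  obtain ⟨x, hx⟩ := exists_sub_mem_ker_smul_top hπ hq hσ F y
  refine ⟨x, ((Submodule.Quotient.eq _).2 ?_).symm⟩
  rw [hsmul]
  exact hx

theorem exists_linearIndependent_span_eq [IsLocalRing R] (s : Set M)
    [Module.FinitePresentation R (Submodule.span R s)] [Module.Flat R (Submodule.span R s)] :
    ∃ (n : ℕ) (e : Fin n → M), (∀ i, e i ∈ s) ∧ LinearIndependent R e ∧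
      Submodule.span R (Set.range e) = Submodule.span R s := by
  let N := Submodule.span R s
  let v : s → N := fun x ↦ ⟨x, Submodule.subset_span x.2⟩
  have hv : Submodule.span R (Set.range v) = ⊤ := by
    apply Submodule.map_injective_of_injective N.subtype_injective
    rw [Submodule.map_span, ← Set.range_comp, Submodule.map_subtype_top]
    simp [v, N, Function.comp_def]
  obtain ⟨κ, a, b, hb⟩ := Module.exists_basis_of_span_of_flat v hv
  have : Finite κ := Module.Finite.finite_basis b
  obtain ⟨n, ⟨g⟩⟩ := Finite.exists_equiv_fin κ
  let b' := b.reindex g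
  refine ⟨n, N.subtype ∘ b', fun i ↦ ?_, b'.linearIndependent.map' _ N.ker_subtype, ?_⟩
  · simp [b', hb, v]
  · rw [Set.range_comp, ← Submodule.map_span, b'.span_eq, Submodule.map_subtype_top]

theorem ker_idSub_eq_span {F : M →ₛₗ[σ] M} {κ : Type*} [Finite κ] {e : κ → M}
    (he : ∀ i, F (e i) = e i) (hli : LinearIndependent R e)
    (hspan : ((idSub F).ker : Set M) ⊆ Submodule.span R (Set.range e)) :
    (idSub F).ker = Submodule.span (fixedSubring σ) (Set.range e) := by
  cases nonempty_fintype κ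
  refine le_antisymm (fun x hx ↦ ?_) (Submodule.span_le.2 ?_)
  · obtain ⟨a, rfl⟩ := (Submodule.mem_span_range_iff_exists_fun R).1 (hspan hx)
    have hcoeff : ∑ i, σ (a i) • e i = ∑ i, a i • e i := by
      simpa [he] using mem_ker_idSub.1 hx
    have ha : ∀ i, σ (a i) = a i :=
      fun i ↦ Fintype.linearIndependent_iffₛ.1 hli _ _ hcoeff i
    exact (Submodule.mem_span_range_iff_exists_fun _).2 ⟨fun i ↦ ⟨a i, ha i⟩, rfl⟩
  · rintro _ ⟨i, rfl⟩
    exact mem_ker_idSub.2 (he i)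

theorem exists_basis_ker_idSub [IsDomain R] [IsPrincipalIdealRing R] [IsLocalRing R]
    [Module.Finite R M] [Module.IsTorsionFree R M] (F : M →ₛₗ[σ] M) :
    ∃ r ≤ Module.finrank R M, Nonempty (Module.Basis (Fin r) (fixedSubring σ) (idSub F).ker) := by
  have : Module.FinitePresentation R (Submodule.span R ((idSub F).ker : Set M)) :=
    Module.finitePresentation_of_finite R _
  obtain ⟨r, e, he, hli, hspan⟩ :=
    exists_linearIndependent_span_eq (R := R) ((idSub F).ker : Set M)
  have hker := ker_idSub_eq_span (fun i ↦ mem_ker_idSub.1 (he i)) hli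
    (hspan ▸ Submodule.subset_span)
  have hliσ : LinearIndependent (fixedSubring σ) e := hli.restrict_scalars' _
  refine ⟨r, by simpa using hli.fintype_card_le_finrank, ⟨?_⟩⟩
  exact (Module.Basis.span hliσ).map (LinearEquiv.ofEq _ _ hker.symm)

end Semilinear

theorem exists_addEquiv_pi_of_basis {A B N ι : Type*} [Semiring A] [Semiring B] [AddCommMonoid N]
    [Module B N] [Finite ι] (b : Module.Basis ι B N) (e : A ≃+* B) :
    ∃ φ : N ≃+ (ι → A), ∀ (c : A) (x : N), φ.symm (c • φ x) = e c • x := by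
  cases nonempty_fintype ι
  let := Module.compHom N (e : A →+* B)
  let b' : Module.Basis ι A N :=
    b.mapCoeffs e.symm fun c x ↦ congrArg (· • x) (e.apply_symm_apply c)
  refine ⟨b'.equivFun.toAddEquiv, fun c x ↦ ?_⟩
  exact (b'.equivFun.symm.map_smul c _).trans (congrArg (c • ·) (b'.equivFun.symm_apply_apply x))

section WittVector

variable {p : ℕ} [Fact p.Prime] {k : Type*} [Field k] [CharP k p]

theorem range_map_castHom_eq_fixedSubring_frobenius :
    (WittVector.map (p := p) (ZMod.castHom (dvd_refl p) k)).range =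
      fixedSubring WittVector.frobenius := by
  ext a
  have hcoeff (n : ℕ) : a.coeff n ∈ (ZMod.castHom (dvd_refl p) k).fieldRange ↔
      (WittVector.frobenius a).coeff n = a.coeff n := by
    rw [ZMod.fieldRange_castHom_eq_bot p, Subfield.mem_bot_iff_pow_eq_self,
      WittVector.coeff_frobenius_charP]
  rw [RingHom.mem_eqLocus, RingHom.id_apply, WittVector.ext_iff, RingHom.mem_range]
  simp_rw [← hcoeff, RingHom.mem_fieldRange]
  constructor
  · rintro ⟨c, rfl⟩ n
    exact ⟨c.coeff n, rfl⟩
  · intro ha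
    choose c hc using ha
    exact ⟨.mk p c, WittVector.ext hc⟩

variable (p k) in
/-- The identification of `W(𝔽_p)` with the Frobenius-fixed subring of `W(k)`, induced by
`𝔽_p → k`. -/
noncomputable def wittVectorZModEquivFixedSubring :
    WittVector p (ZMod p) ≃+* fixedSubring (WittVector.frobenius (p := p) (R := k)) :=
  (RingEquiv.ofBijective (WittVector.map (ZMod.castHom (dvd_refl p) k)).rangeRestrict
    ⟨fun _ _ h ↦ WittVector.map_injective _ (RingHom.injective _) (congrArg Subtype.val h),
      RingHom.rangeRestrict_surjective _⟩).trans
    (RingEquiv.subringCongr range_map_castHom_eq_fixedSubring_frobenius)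

theorem idSub_surjective_of_wittVector [IsAlgClosed k] {M : Type*} [AddCommGroup M]
    [Module (WittVector p k) M] [Module.Finite (WittVector p k) M]
    (F : M →ₛₗ[WittVector.frobenius (p := p) (R := k)] M) : Function.Surjective (idSub F) := by
  have hker : RingHom.ker (WittVector.constantCoeff (p := p) (R := k)) =
      Ideal.span {(p : WittVector p k)} := WittVector.ker_constantCoeff
  have : IsAdicComplete (RingHom.ker (WittVector.constantCoeff (p := p) (R := k))) M := by
    rw [hker]
    exact isAdicComplete_of_finite _ M
  refine idSub_surjective_of_frobenius_lift (WittVector.constantCoeff_surjective p)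
    (CharP.cast_eq_zero k p) (fun a ↦ WittVector.coeff_frobenius_charP p a 0)
    (J := Ideal.span {(p : fixedSubring _)}) ?_ F
  rw [Ideal.map_span, Set.image_singleton, map_natCast, hker]

end WittVector

/-- Let `k` be an algebraically closed field of characteristic `p > 0`,
`W = W(k)` its Witt ring with Frobenius `σ`, and `M` a finite free `W`-module with an
additive `σ`-semilinear map `F : M → M`.  Then `1 − F : M → M` is surjective, and its
kernel `M^{F=1}` is a free `ℤ_p`-module of finite rank at most the `W`-rank of `M`
(where `ℤ_p = W(𝔽_p)` acts on `M^{F=1}` through the natural inclusion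
`W(𝔽_p) → W(k)`). -/
theorem stmt4 (p : ℕ) [Fact p.Prime] (k : Type*) [Field k] [IsAlgClosed k] [CharP k p]
    (M : Type*) [AddCommGroup M] [Module (WittVector p k) M]
    [Module.Free (WittVector p k) M] [Module.Finite (WittVector p k) M]
    (F : M → M)
    (hFadd : ∀ x y : M, F (x + y) = F x + F y)
    (hFsl : ∀ (a : WittVector p k) (x : M), F (a • x) = WittVector.frobenius a • F x) :
    Function.Surjective (fun x : M => x - F x) ∧
    ∃ K : AddSubgroup M, (∀ x : M, x ∈ K ↔ F x = x) ∧
      ∃ r : ℕ, r ≤ Module.finrank (WittVector p k) M ∧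
        ∃ φ : K ≃+ (Fin r → WittVector p (ZMod p)),
          ∀ (c : WittVector p (ZMod p)) (x : K),
            ((φ.symm (c • φ x) : K) : M) =
              (WittVector.map (ZMod.castHom (dvd_refl p) k)) c • (x : M) := by
  let G : M →ₛₗ[WittVector.frobenius (p := p) (R := k)] M :=
    { toFun := F, map_add' := hFadd, map_smul' := hFsl }
  obtain ⟨r, hr, ⟨b⟩⟩ := exists_basis_ker_idSub G
  obtain ⟨φ, hφ⟩ := exists_addEquiv_pi_of_basis b (wittVectorZModEquivFixedSubring p k)
  exact ⟨idSub_surjective_of_wittVector G, (idSub G).ker.toAddSubgroup,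
    fun _ ↦ mem_ker_idSub, r, hr, φ, fun c x ↦ congrArg Subtype.val (hφ c x)⟩
end

section
/- Let k be an algebraically closed field of characteristic p > 0, W = W(k) its ring of p-typical Witt vectors with Frobenius σ, and let M be a finite free W-module equipped with an additive σ-semilinear map F : M → M. If x₁, …, x_r ∈ M satisfy F(xᵢ) = xᵢ for all i and are linearly independent over ℤ_p, then x₁, …, x_r are linearly independent over W. In particular, the ℤ_p-rank of M^{F=1} is at most the W-rank of M. -/
/-!
Over a valuation ring, a nontrivial relation among `F`-fixed vectors of a torsion-free module can be
divided by its coefficient of least valuation, so that one coefficient becomes `1`. Applying `F - 1`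
to the normalized relation kills that coefficient and yields a relation on fewer vectors, with
coefficients `σ b - b`. By induction these vanish, so the normalized relation already has `σ`-fixed
coefficients. The Witt vectors of a perfect field form a valuation ring, and their `σ`-fixed
elements are those of `W(𝔽_p)`.
-/

section ValuationRing

variable {R ι : Type*}

theorem exists_mem_forall_dvd_of_nonempty [Monoid R] [PreValuationRing R] (a : ι → R)
    {s : Finset ι} (hs : s.Nonempty) : ∃ j ∈ s, ∀ i ∈ s, a j ∣ a i := by
  induction hs using Finset.Nonempty.cons_induction with
  | singleton i => simp
  | cons i s _ _ ih =>
    obtain ⟨j, hj, hdvd⟩ := ih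
    simp only [Finset.mem_cons, exists_eq_or_imp, forall_eq_or_imp]
    rcases ValuationRing.dvd_total (a i) (a j) with hij | hji
    · exact .inl ⟨dvd_rfl, fun l hl ↦ hij.trans (hdvd l hl)⟩
    · exact .inr ⟨j, hj, hji, hdvd⟩

variable [CommRing R] [IsDomain R] [ValuationRing R]
  {M : Type*} [AddCommGroup M] [Module R M] [Module.IsTorsionFree R M] {x : ι → M}

theorem exists_coeff_eq_one_sum_smul_eq_zero {s : Finset ι} (hx : ¬ LinearIndepOn R x s) :
    ∃ j ∈ s, ∃ b : ι → R, b j = 1 ∧ ∑ i ∈ s, b i • x i = 0 := by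
  simp only [linearIndepOn_finset_iff, not_forall] at hx
  obtain ⟨a, hrel, l, hl, hal⟩ := hx
  obtain ⟨j, hj, hdvd⟩ := exists_mem_forall_dvd_of_nonempty a ⟨l, hl⟩
  have haj : a j ≠ 0 := fun h ↦ hal (zero_dvd_iff.mp (h ▸ hdvd l hl))
  choose! b hb using hdvd
  refine ⟨j, hj, b, mul_left_cancel₀ haj (by rw [mul_one, ← hb j hj]), ?_⟩
  have hsmul : a j • ∑ i ∈ s, b i • x i = 0 := by
    rw [Finset.smul_sum, ← hrel]
    exact Finset.sum_congr rfl fun i hi ↦ by rw [smul_smul, ← hb i hi]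
  exact (smul_eq_zero.mp hsmul).resolve_left haj

theorem linearIndependent_of_eqLocus {σ : R →+* R} (F : M →ₛₗ[σ] M)
    (hfix : ∀ i, F (x i) = x i) (hx : LinearIndependent (σ.eqLocus (RingHom.id R)) x) :
    LinearIndependent R x := by
  classical
  suffices h : ∀ s : Finset ι, LinearIndepOn R x s from
    linearIndependent_iff_finset_linearIndependent.mpr h
  intro s
  induction s using Finset.strongInduction with
  | H s ih =>
    by_contra hdep
    obtain ⟨j, hj, b, hbj, hrel⟩ := exists_coeff_eq_one_sum_smul_eq_zero hdep
    have hrel_map : ∑ i ∈ s, σ (b i) • x i = 0 := by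
      simpa only [map_sum, map_smulₛₗ, hfix, map_zero] using congrArg F hrel
    have hrel_erase : ∑ i ∈ s.erase j, (σ (b i) - b i) • x i = 0 := by
      rw [Finset.sum_erase s (by simp [hbj])]
      simp only [sub_smul, Finset.sum_sub_distrib, hrel_map, hrel, sub_zero]
    have hb_fixed : ∀ i ∈ s, σ (b i) = b i := fun i hi ↦ by
      rcases eq_or_ne i j with rfl | hij
      · rw [hbj, map_one]
      · exact sub_eq_zero.mp <| linearIndepOn_finset_iff.mp (ih _ (Finset.erase_ssubset hj)) _
          hrel_erase i (Finset.mem_erase.mpr ⟨hij, hi⟩)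
    have hb_zero := Fintype.linearIndependent_iff.mp
      (hx.comp ((↑) : s → ι) Subtype.val_injective) (fun i ↦ ⟨b i, hb_fixed i i.2⟩)
      ((Finset.sum_coe_sort s fun i ↦ b i • x i).trans hrel)
    exact one_ne_zero (hbj.symm.trans (congrArg Subtype.val (hb_zero ⟨j, hj⟩)))

end ValuationRing

section WittVector

variable {p : ℕ} [Fact p.Prime]

theorem mem_range_wittVector_map_iff {A B : Type*} [CommRing A] [CommRing B] {f : A →+* B}
    {b : WittVector p B} : b ∈ (WittVector.map f).range ↔ ∀ n, b.coeff n ∈ f.range := by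
  refine ⟨?_, fun h ↦ ?_⟩
  · rintro ⟨a, rfl⟩ n
    exact ⟨a.coeff n, (WittVector.map_coeff f a n).symm⟩
  · choose a ha using h
    exact ⟨WittVector.mk p a, WittVector.ext fun n ↦ (WittVector.map_coeff f _ n).trans (ha n)⟩

theorem range_wittVector_map_castHom_eq_eqLocus_frobenius (k : Type*) [Field k] [CharP k p] :
    (WittVector.map (ZMod.castHom (dvd_refl p) k)).range =
      (WittVector.frobenius (p := p) (R := k)).eqLocus (RingHom.id _) := by
  ext b
  have hcoeff (n : ℕ) : b.coeff n ∈ (ZMod.castHom (dvd_refl p) k).range ↔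
      b.coeff n ^ p = b.coeff n := by
    rw [← Subfield.mem_bot_iff_pow_eq_self, ← ZMod.fieldRange_castHom_eq_bot p]
    rfl
  simp only [mem_range_wittVector_map_iff, hcoeff, ← WittVector.coeff_frobenius_charP,
    ← WittVector.ext_iff, RingHom.mem_eqLocus, RingHom.id_apply]

end WittVector

theorem stmt5_general {p : ℕ} [Fact p.Prime] {k : Type*} [Field k] [CharP k p] [PerfectRing k p]
    {M ι : Type*} [AddCommGroup M] [Module (WittVector p k) M]
    [Module.IsTorsionFree (WittVector p k) M]
    (F : M →ₛₗ[(WittVector.frobenius : WittVector p k →+* WittVector p k)] M) {x : ι → M}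
    (hfix : ∀ i, F (x i) = x i)
    (hindep : letI := Module.compHom M (WittVector.map (p := p) (ZMod.castHom (dvd_refl p) k))
      LinearIndependent (WittVector p (ZMod p)) x) :
    LinearIndependent (WittVector p k) x := by
  apply linearIndependent_of_eqLocus F hfix
  rw [← range_wittVector_map_castHom_eq_eqLocus_frobenius]
  let := Module.compHom M (WittVector.map (p := p) (ZMod.castHom (dvd_refl p) k))
  exact hindep.map_of_surjective_injective
    (WittVector.map (p := p) (ZMod.castHom (dvd_refl p) k)).rangeRestrict (AddMonoidHom.id M)
    (RingHom.rangeRestrict_surjective _) (fun _ h ↦ h) fun _ _ ↦ rfl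

/-- Let `k` be an algebraically closed field of characteristic `p > 0`,
`W = W(k)` its Witt ring with Frobenius `σ`, and `M` a finite free `W`-module with an
additive `σ`-semilinear map `F : M → M`.  If `x₁, …, x_r ∈ M` are fixed by `F` and
linearly independent over `ℤ_p = W(𝔽_p)` (acting through the natural inclusion
`W(𝔽_p) → W(k)`), then they are linearly independent over `W`. -/
theorem stmt5 (p : ℕ) [Fact p.Prime] (k : Type*) [Field k] [IsAlgClosed k] [CharP k p]
    (M : Type*) [AddCommGroup M] [Module (WittVector p k) M]
    [Module.Free (WittVector p k) M] [Module.Finite (WittVector p k) M]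
    (F : M → M)
    (hFadd : ∀ x y : M, F (x + y) = F x + F y)
    (hFsl : ∀ (a : WittVector p k) (x : M), F (a • x) = WittVector.frobenius a • F x)
    (r : ℕ) (x : Fin r → M)
    (hfix : ∀ i, F (x i) = x i)
    (hindep : ∀ c : Fin r → WittVector p (ZMod p),
      (∑ i, (WittVector.map (ZMod.castHom (dvd_refl p) k)) (c i) • x i) = 0 →
        ∀ i, c i = 0) :
    LinearIndependent (WittVector p k) x := by
  let := Module.compHom M (WittVector.map (p := p) (ZMod.castHom (dvd_refl p) k))
  exact stmt5_general ⟨⟨F, hFadd⟩, hFsl⟩ hfix (Fintype.linearIndependent_iff.mpr hindep)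
end
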